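/- arXiv:2106.02265 — 2 statements merged into one kernel-verified Lean document; each statement's English description precedes it below -/
import Mathlib

section
/- Let F be a finite field with q elements, q ≡ 2 or 8 (mod 15), of characteristic 2. Then FG/J(FG) ≅ F ⊕ F₂ ⊕ M₂(F₂)³ as F-algebras, where G = C_3 × D_10 and F₂ denotes the quadratic field extension of F. -/
/-!
Let `ω` be a primitive cube root of unity and `K = F(ω)`. Since `ω² + ω = 1` in characteristic two,
`ω` is the trace of a rotation of order five in a two-dimensional representation of `D₁₀` over `K`.
Twisting this representation and the trivial one by the characters of `C₃` maps `FG` to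
`F × K × M₂(K)³`. Each component of this map is onto and explicit elements of `FG` separate the
components, so the map is onto. By dimension, its kernel is spanned by the three sums over cosets
of `D₁₀`, whose pairwise products are multiples of `|D₁₀| = 10 = 0`. Hence the kernel is nilpotent,
and it is the radical because the target is semisimple.
-/

open MonoidAlgebra

theorem geom_sum_eq_ite_of_pow_eq_one {K : Type*} [DivisionRing K] [DecidableEq K] {ζ : K} {n : ℕ}
    (hζ : ζ ^ n = 1) : ∑ k ∈ Finset.range n, ζ ^ k = if ζ = 1 then (n : K) else 0 := by
  split_ifs with h
  · simp [h]
  · rw [geom_sum_eq h, hζ, sub_self, zero_div]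

section RingHoms

variable {R : Type*} [Ring R]

theorem mem_jacobson_bot_of_forall_isNilpotent_mul {x : R} (hx : ∀ y, IsNilpotent (y * x)) :
    x ∈ Ideal.jacobson (⊥ : Ideal R) := by
  rw [Ideal.mem_jacobson_iff]
  intro y
  obtain ⟨u, hu⟩ := (hx y).isUnit_one_add
  refine ⟨↑u⁻¹, ?_⟩
  have inv_mul : (↑u⁻¹ : R) * (1 + y * x) = 1 := by rw [← hu, Units.inv_mul]
  rw [Ideal.mem_bot, mul_assoc, ← sub_eq_zero.mpr inv_mul]
  noncomm_ring

theorem ker_eq_jacobson_bot_of_isNilpotent {S : Type*} [Ring S] [IsSemisimpleRing S]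
    {f : R →+* S} (hf : Function.Surjective f) (hnil : ∀ x ∈ RingHom.ker f, IsNilpotent x) :
    RingHom.ker f = Ideal.jacobson ⊥ := by
  refine le_antisymm (fun x hx ↦ ?_) ?_
  · exact mem_jacobson_bot_of_forall_isNilpotent_mul fun y ↦
      hnil _ (Ideal.mul_mem_left _ y hx)
  · calc Ideal.jacobson ⊥ ≤ Ideal.jacobson (Ideal.comap f ⊥) := Ideal.jacobson_mono bot_le
      _ = Ideal.comap f (Ideal.jacobson ⊥) := (Ideal.comap_jacobson_of_surjective hf).symm
      _ = RingHom.ker f := by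
        rw [Ideal.jacobson_bot, IsSemisimpleRing.jacobson_eq_bot, RingHom.ker_eq_comap_bot]

theorem surjective_prod_of_separating {k S T : Type*} [CommSemiring k] [Algebra k R] [Ring S]
    [Algebra k S] [Ring T] [Algebra k T] {f : R →ₐ[k] S} {g : R →ₐ[k] T}
    (hf : Function.Surjective f) (hg : Function.Surjective g) {e : R} (hfe : f e = 1)
    (hge : g e = 0) : Function.Surjective (f.prod g) := by
  rintro ⟨s, t⟩
  obtain ⟨x, rfl⟩ := hf s
  obtain ⟨y, rfl⟩ := hg t
  exact ⟨e * x + (1 - e) * y, by simp [hfe, hge]⟩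

theorem surjective_pi_of_separating {k R ι : Type*} [CommSemiring k] [Semiring R] [Algebra k R]
    [Finite ι] [DecidableEq ι] {S : ι → Type*} [∀ i, Semiring (S i)] [∀ i, Algebra k (S i)]
    {f : ∀ i, R →ₐ[k] S i} (hf : ∀ i, Function.Surjective (f i)) {e : ι → R}
    (he : ∀ i j, f j (e i) = if i = j then 1 else 0) : Function.Surjective (AlgHom.pi f) := by
  have := Fintype.ofFinite ι
  intro s
  choose x hx using fun i ↦ hf i (s i)
  exact ⟨∑ i, e i * x i, by ext j; simp [he, hx]⟩

end RingHoms

section GroupAlgebra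

theorem finrank_monoidAlgebra (k G : Type*) [Semiring k] [StrongRankCondition k] [Fintype G] :
    Module.finrank k (MonoidAlgebra k G) = Fintype.card G :=
  Module.finrank_eq_card_basis (MonoidAlgebra.basis G k)

variable (k : Type*) {H N : Type*} [Fintype N]

/-- The sum in `k[H × N]` of the elements of the coset of `N` indexed by `h`. -/
noncomputable def cosetSum [Semiring k] (h : H) : MonoidAlgebra k (H × N) :=
  ∑ n : N, single (h, n) 1

theorem coeff_cosetSum [Semiring k] [DecidableEq H] (h h' : H) (n : N) :
    (cosetSum k h).coeff (h', n) = if h = h' then 1 else 0 := by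
  classical
  simp only [cosetSum, coeff_sum, Finset.sum_apply', coeff_single, Finsupp.single_apply,
    Prod.mk.injEq]
  by_cases hh : h = h' <;> simp [hh]

theorem linearIndependent_cosetSum [Ring k] [Nonempty N] :
    LinearIndependent k (cosetSum k : H → MonoidAlgebra k (H × N)) := by
  classical
  rw [linearIndependent_iff']
  intro s g hg i hi
  have coeff_eq := congrArg (fun x ↦ x.coeff (i, Classical.arbitrary N)) hg
  simpa [coeff_cosetSum, hi] using coeff_eq

theorem cosetSum_mul_cosetSum [Semiring k] [Mul H] [Group N] (h h' : H) :
    cosetSum k h * cosetSum (N := N) k h' = Fintype.card N • cosetSum k (h * h') := by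
  have translate (m : N) : single (h, m) (1 : k) * cosetSum k h' = cosetSum k (h * h') := by
    simp only [cosetSum, Finset.mul_sum, single_mul_single, Prod.mk_mul_mk, mul_one]
    exact Fintype.sum_equiv (Equiv.mulLeft m) _ _ fun _ ↦ rfl
  rw [cosetSum, Finset.sum_mul, Finset.sum_congr rfl fun m _ ↦ translate m, Finset.sum_const,
    Finset.card_univ]

theorem span_cosetSum_sq [CommSemiring k] [Monoid H] [Group N] (hN : (Fintype.card N : k) = 0) :
    Submodule.span k (Set.range (cosetSum k : H → MonoidAlgebra k (H × N))) ^ 2 = ⊥ := by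
  rw [sq, Submodule.span_mul_span, Submodule.span_eq_bot]
  rintro _ ⟨_, ⟨h, rfl⟩, _, ⟨h', rfl⟩, rfl⟩
  simp [cosetSum_mul_cosetSum, ← Nat.cast_smul_eq_nsmul k, hN]

end GroupAlgebra

section TwistedLift

variable {F K A H N : Type*} [CommSemiring F] [CommSemiring K] [Semiring A] [Algebra F A]
  [Algebra K A] [Monoid H] [Monoid N]

variable (F) in
/-- The algebra map on `F[H × N]` extending the twist `(h, n) ↦ α h • ρ n` of a representation `ρ`
of `N` by a character `α` of `H`. -/
noncomputable def twistedLift (α : H →* K) (ρ : N →* A) : MonoidAlgebra F (H × N) →ₐ[F] A :=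
  lift F A (H × N)
    { toFun := fun g ↦ α g.1 • ρ g.2
      map_one' := by simp
      map_mul' := fun g g' ↦ by
        simp only [Prod.fst_mul, Prod.snd_mul, map_mul, smul_mul_smul_comm] }

variable (α : H →* K) (ρ : N →* A)

@[simp]
theorem twistedLift_single (h : H) (n : N) : twistedLift F α ρ (single (h, n) 1) = α h • ρ n := by
  simp [twistedLift]

theorem twistedLift_cosetSum [Fintype N] (h : H) :
    twistedLift F α ρ (cosetSum F h) = α h • ∑ n, ρ n := by
  simp [cosetSum, Finset.smul_sum]

theorem twistedLift_comp_inr :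
    (twistedLift F α ρ).comp (mapDomainAlgHom F F (MonoidHom.inr H N)) = lift F A N ρ := by
  ext n
  simp

theorem twistedLift_surjective_of_lift (hρ : Function.Surjective (lift F A N ρ)) :
    Function.Surjective (twistedLift F α ρ) := by
  rw [← twistedLift_comp_inr α ρ] at hρ
  exact Function.Surjective.of_comp hρ

end TwistedLift

section Dihedral

variable {M : Type*} [Monoid M] {n : ℕ} [NeZero n] {R S : M}

theorem pow_mul_mul_pow_of_mul_mul (hRS : R * S * R = S) (k : ℕ) : R ^ k * S * R ^ k = S := by
  induction k with
  | zero => simp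
  | succ k ih =>
    calc R ^ (k + 1) * S * R ^ (k + 1) = R ^ k * (R * S * R) * R ^ k := by
          nth_rw 1 [pow_succ]; simp only [pow_succ', mul_assoc]
      _ = S := by rw [hRS, ih]

theorem pow_val_add (hR : R ^ n = 1) (i j : ZMod n) :
    R ^ (i + j).val = R ^ i.val * R ^ j.val := by
  rw [ZMod.val_add, ← pow_add, ← pow_eq_pow_mod _ hR]

/-- The homomorphism out of the dihedral group of order `2 * n` determined by the images `R` of the
rotation `r 1` and `S` of the reflection `sr 0`. -/
def dihedralLift (hR : R ^ n = 1) (hS : S * S = 1) (hRS : R * S * R = S) :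
    DihedralGroup n →* M where
  toFun
    | .r i => R ^ i.val
    | .sr i => S * R ^ i.val
  map_one' := by simp only [DihedralGroup.one_def, ZMod.val_zero, pow_zero]
  map_mul' := by
    have split (i j : ZMod n) : R ^ j.val = R ^ i.val * R ^ (j - i).val := by
      rw [← pow_val_add hR, add_sub_cancel]
    have conj (i : ZMod n) := pow_mul_mul_pow_of_mul_mul hRS i.val
    rintro (i | i) (j | j)
    · exact pow_val_add hR i j
    · simp only [DihedralGroup.r_mul_sr, split i j, ← mul_assoc, conj]
    · simp only [DihedralGroup.sr_mul_r, pow_val_add hR, mul_assoc]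
    · simp only [DihedralGroup.sr_mul_sr]
      rw [mul_assoc, ← mul_assoc (R ^ i.val), split i j, ← mul_assoc (R ^ i.val * S), conj,
        ← mul_assoc, hS, one_mul]

theorem sum_pow_zmod_val {B : Type*} [Semiring B] (b : B) :
    ∑ i : ZMod n, b ^ i.val = ∑ i ∈ Finset.range n, b ^ i := by
  obtain ⟨m, rfl⟩ := Nat.exists_eq_succ_of_ne_zero (NeZero.ne n)
  exact Fin.sum_univ_eq_sum_range (b ^ ·) (m + 1)

theorem sum_dihedralLift {B : Type*} [Semiring B] {R S : B} (hR : R ^ n = 1) (hS : S * S = 1)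
    (hRS : R * S * R = S) :
    ∑ d, dihedralLift hR hS hRS d = (1 + S) * ∑ i ∈ Finset.range n, R ^ i := by
  rw [← Equiv.sum_comp DihedralGroup.equivSum.symm, Fintype.sum_sum_type, add_mul, one_mul,
    ← sum_pow_zmod_val, Finset.mul_sum]
  rfl

theorem natCast_card_dihedralGroup (B : Type*) [AddMonoidWithOne B] [CharP B 2] (n : ℕ) [NeZero n] :
    (Fintype.card (DihedralGroup n) : B) = 0 := by
  rw [CharP.cast_eq_zero_iff B 2, DihedralGroup.card]
  exact dvd_mul_right 2 n

end Dihedral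

section Pentagon

variable {K : Type*} [CommRing K] {t : K}

/-- The companion matrix of `X² - t X + 1`: a model over any ring containing `t` of the rotation of
the plane with trace `t`. -/
def rotationMatrix (t : K) : Matrix (Fin 2) (Fin 2) K := !![0, -1; 1, t]

variable (K) in
/-- The involution of `K²` exchanging the basis vectors, a reflection that inverts every
`rotationMatrix t`. -/
def reflectionMatrix : Matrix (Fin 2) (Fin 2) K := !![0, 1; 1, 0]

theorem reflectionMatrix_mul_self : reflectionMatrix K * reflectionMatrix K = 1 := by
  simp [reflectionMatrix, Matrix.one_fin_two]

theorem rotationMatrix_mul_reflectionMatrix_mul_rotationMatrix (t : K) :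
    rotationMatrix t * reflectionMatrix K * rotationMatrix t = reflectionMatrix K := by
  simp [rotationMatrix, reflectionMatrix]

theorem rotationMatrix_sq (t : K) : rotationMatrix t ^ 2 = t • rotationMatrix t - 1 := by
  rw [sq]
  ext i j
  fin_cases i <;> fin_cases j <;> simp [rotationMatrix, sub_eq_neg_add]

theorem rotationMatrix_pow_three (ht : t ^ 2 + t = 1) :
    rotationMatrix t ^ 3 = -(t • rotationMatrix t) - t • 1 := by
  calc rotationMatrix t ^ 3 = (t ^ 2 - 1) • rotationMatrix t - t • 1 := by
        rw [pow_succ, rotationMatrix_sq, sub_mul, smul_mul_assoc, one_mul, ← sq,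
          rotationMatrix_sq]
        module
    _ = -(t • rotationMatrix t) - t • 1 := by
        rw [show t ^ 2 - 1 = -t by linear_combination ht, neg_smul]

theorem rotationMatrix_pow_four (ht : t ^ 2 + t = 1) :
    rotationMatrix t ^ 4 = t • 1 - rotationMatrix t := by
  calc rotationMatrix t ^ 4 = t • 1 - (t ^ 2 + t) • rotationMatrix t := by
        rw [pow_succ, rotationMatrix_pow_three ht, sub_mul, neg_mul, smul_mul_assoc, smul_mul_assoc,
          one_mul, ← sq, rotationMatrix_sq]
        module
    _ = t • 1 - rotationMatrix t := by rw [ht, one_smul]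

theorem rotationMatrix_pow_five (ht : t ^ 2 + t = 1) : rotationMatrix t ^ 5 = 1 := by
  rw [pow_succ, rotationMatrix_pow_four ht, sub_mul, smul_mul_assoc, one_mul, ← sq,
    rotationMatrix_sq, sub_sub_cancel]

theorem sum_rotationMatrix_pow (ht : t ^ 2 + t = 1) :
    ∑ i ∈ Finset.range 5, rotationMatrix t ^ i = 0 := by
  simp only [Finset.sum_range_succ, Finset.sum_range_zero, rotationMatrix_pow_four ht,
    rotationMatrix_pow_three ht, rotationMatrix_sq, pow_one, pow_zero]
  module

/-- The two-dimensional representation of the symmetry group of the regular pentagon in which the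
rotation `r 1` has trace `t`; over `ℝ`, the two choices of `t` are `2 cos (2π / 5)` and
`2 cos (4π / 5)`. -/
def pentagonRep (ht : t ^ 2 + t = 1) : DihedralGroup 5 →* Matrix (Fin 2) (Fin 2) K :=
  dihedralLift (rotationMatrix_pow_five ht) reflectionMatrix_mul_self
    (rotationMatrix_mul_reflectionMatrix_mul_rotationMatrix t)

theorem pentagonRep_r_one (ht : t ^ 2 + t = 1) : pentagonRep ht (.r 1) = rotationMatrix t :=
  pow_one _

theorem pentagonRep_sr_zero (ht : t ^ 2 + t = 1) : pentagonRep ht (.sr 0) = reflectionMatrix K :=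
  mul_one _

theorem pentagonRep_r_one_add_r_neg_one (ht : t ^ 2 + t = 1) :
    pentagonRep ht (.r 1) + pentagonRep ht (.r (-1)) = t • 1 := by
  have r_neg_one : pentagonRep ht (.r (-1)) = rotationMatrix t ^ 4 := rfl
  rw [r_neg_one, pentagonRep_r_one, rotationMatrix_pow_four ht, add_sub_cancel]

theorem sum_pentagonRep (ht : t ^ 2 + t = 1) : ∑ d, pentagonRep ht d = 0 := by
  rw [pentagonRep, sum_dihedralLift, sum_rotationMatrix_pow ht, mul_zero]

-- The linear system for the coefficients has determinant `4 - t²`, and `(4 - t²) (2 - t) = 5`.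
theorem exists_eq_combination_rotationMatrix_reflectionMatrix (ht : t ^ 2 + t = 1)
    (h5 : IsUnit (5 : K)) (X : Matrix (Fin 2) (Fin 2) K) :
    ∃ a b c d : K, X = a • 1 + b • reflectionMatrix K + c • rotationMatrix t +
      d • (rotationMatrix t * reflectionMatrix K) := by
  obtain ⟨v, hv⟩ := h5.exists_right_inv
  let c := v * (2 - t) * (2 * (X 1 0 - X 0 1) - t * (X 1 1 - X 0 0))
  let d := v * (2 - t) * (2 * (X 1 1 - X 0 0) - t * (X 1 0 - X 0 1))
  refine ⟨X 0 0 + d, X 0 1 + c, c, d, ?_⟩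
  ext i j
  fin_cases i <;> fin_cases j <;> simp [rotationMatrix, reflectionMatrix] <;> grind

theorem lift_pentagonRep_surjective {F : Type*} [CommSemiring F] [Algebra F K] (ht : t ^ 2 + t = 1)
    (h5 : IsUnit (5 : K)) (hFt : Algebra.adjoin F {t} = ⊤) :
    Function.Surjective (lift F _ _ (pentagonRep ht)) := by
  rw [← AlgHom.range_eq_top, Algebra.eq_top_iff]
  set A := (lift F _ _ (pentagonRep ht)).range
  have group_mem (d : DihedralGroup 5) : pentagonRep ht d ∈ A := ⟨single d 1, by simp⟩
  have rotation_mem : rotationMatrix t ∈ A := pentagonRep_r_one ht ▸ group_mem _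
  have reflection_mem : reflectionMatrix K ∈ A := pentagonRep_sr_zero ht ▸ group_mem _
  have scalar_mem (a : K) : (a • 1 : Matrix (Fin 2) (Fin 2) K) ∈ A := by
    have t_mem : (t • 1 : Matrix (Fin 2) (Fin 2) K) ∈ A :=
      pentagonRep_r_one_add_r_neg_one ht ▸ add_mem (group_mem _) (group_mem _)
    have adjoin_le : Algebra.adjoin F {t} ≤ A.comap (IsScalarTower.toAlgHom F K _) := by
      rw [Algebra.adjoin_le_iff, Set.singleton_subset_iff]
      simpa [Algebra.algebraMap_eq_smul_one] using t_mem
    simpa [Algebra.algebraMap_eq_smul_one] using adjoin_le (hFt ▸ Algebra.mem_top : a ∈ _)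
  have smul_mem (a : K) {X : Matrix (Fin 2) (Fin 2) K} (hX : X ∈ A) : a • X ∈ A := by
    simpa using mul_mem (scalar_mem a) hX
  intro X
  obtain ⟨a, b, c, d, rfl⟩ := exists_eq_combination_rotationMatrix_reflectionMatrix ht h5 X
  exact add_mem (add_mem (add_mem (scalar_mem a) (smul_mem b reflection_mem))
    (smul_mem c rotation_mem)) (smul_mem d (mul_mem rotation_mem reflection_mem))

end Pentagon

section FiniteField

theorem isCyclotomicExtension_singleton_of_finrank_prime {F K : Type*} [Field F] [Finite F]
    [Field K] [Algebra F K] (hd : (Module.finrank F K).Prime) {ℓ : ℕ} (hℓ : ℓ.Prime)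
    (hK : ℓ ∣ Nat.card F ^ Module.finrank F K - 1) (hF : ¬ ℓ ∣ Nat.card F - 1) :
    IsCyclotomicExtension {ℓ} F K := by
  have := Module.finite_of_finrank_pos hd.pos
  have := Module.finite_of_finite F (M := K)
  have : Fact ℓ.Prime := ⟨hℓ⟩
  have : NeZero ℓ := ⟨hℓ.ne_zero⟩
  obtain ⟨ζ, hζ⟩ : ∃ ζ : K, IsPrimitiveRoot ζ ℓ := by
    rw [← Module.natCard_eq_pow_finrank, ← Nat.card_units] at hK
    obtain ⟨u, hu⟩ := exists_prime_orderOf_dvd_card' ℓ hK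
    exact ⟨u, IsPrimitiveRoot.coe_units_iff.mpr (hu ▸ IsPrimitiveRoot.orderOf u)⟩
  have notMem_bot : ζ ∉ (⊥ : Subalgebra F K) := by
    rintro ⟨x, hx⟩
    have hx : IsPrimitiveRoot x ℓ :=
      IsPrimitiveRoot.of_map_of_injective (hx ▸ hζ) (algebraMap F K).injective
    obtain ⟨u, rfl⟩ := hx.isUnit hℓ.ne_zero
    rw [IsPrimitiveRoot.coe_units_iff] at hx
    rw [← Nat.card_units, hx.eq_orderOf] at hF
    exact hF (orderOf_dvd_natCard u)
  have := Subalgebra.isSimpleOrder_of_finrank_prime F K hd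
  have adjoin_eq_top : Algebra.adjoin F {b : K | b ^ ℓ = 1} = ⊤ :=
    (eq_bot_or_eq_top _).resolve_left fun h ↦
      notMem_bot (h ▸ Algebra.subset_adjoin hζ.pow_eq_one)
  exact (IsCyclotomicExtension.iff_singleton ℓ F K).mpr
    ⟨⟨ζ, hζ⟩, Algebra.eq_top_iff.mp adjoin_eq_top⟩

theorem isCyclotomicExtension_three_of_card_mod_three {F K : Type*} [Field F] [Finite F] [Field K]
    [Algebra F K] (hK : Module.finrank F K = 2) (hF : Nat.card F % 3 = 2) :
    IsCyclotomicExtension {3} F K := by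
  refine isCyclotomicExtension_singleton_of_finrank_prime (hK ▸ Nat.prime_two) Nat.prime_three
    ?_ (by omega)
  have sq_mod : Nat.card F ^ 2 % 3 = 1 := by simp [Nat.pow_mod, hF]
  rw [hK]
  omega

end FiniteField

section Blocks

open Multiplicative (ofAdd)

/-- The group `C₃ × D₁₀`. -/
abbrev CyclicProdDihedral : Type := Multiplicative (ZMod 3) × DihedralGroup 5

section Elements

variable (F : Type*) [CommSemiring F]

/-- The generator of `C₃` as an element of the group algebra. -/
noncomputable def cyclicGenerator : MonoidAlgebra F CyclicProdDihedral := single (ofAdd 1, 1) 1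

/-- The sum of a rotation of order five and its inverse, on which an irreducible two-dimensional
representation of `D₁₀` takes a scalar value. -/
noncomputable def rotationTrace : MonoidAlgebra F CyclicProdDihedral :=
  single (1, .r 1) 1 + single (1, .r (-1)) 1

/-- The element `∑ₖ ω ^ (-i k) c ^ k` of `F[C₃ × D₁₀]` cutting out the `i`-th character of `C₃`,
where the cube root of unity `ω`, which need not lie in `F`, is replaced by `rotationTrace`. -/
noncomputable def characterProjector (i : Fin 3) : MonoidAlgebra F CyclicProdDihedral :=
  ∑ k ∈ Finset.range 3, (rotationTrace F ^ (2 * i : ℕ) * cyclicGenerator F) ^ k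

variable {F} {K A : Type*} [CommSemiring K] [Semiring A] [Algebra F A] [Algebra K A]
  (α : Multiplicative (ZMod 3) →* K) (ρ : DihedralGroup 5 →* A)

theorem twistedLift_cyclicGenerator :
    twistedLift F α ρ (cyclicGenerator F) = α (ofAdd 1) • 1 := by
  simp [cyclicGenerator]

theorem twistedLift_rotationTrace :
    twistedLift F α ρ (rotationTrace F) = ρ (.r 1) + ρ (.r (-1)) := by
  simp [rotationTrace]

end Elements

variable {F K : Type*} [Field F] [Field K] [Algebra F K] {ω : K}

/-- The character of `C₃` sending the generator to a cube root of unity `ω`. -/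
noncomputable def cubicCharacter (hω : IsPrimitiveRoot ω 3) : Multiplicative (ZMod 3) →* K :=
  (AddChar.zmodChar 3 hω.pow_eq_one).toMonoidHom

theorem cubicCharacter_ofAdd_one (hω : IsPrimitiveRoot ω 3) : cubicCharacter hω (ofAdd 1) = ω :=
  pow_one ω

theorem sq_add_self_of_isPrimitiveRoot_three [CharP K 2] (hω : IsPrimitiveRoot ω 3) :
    ω ^ 2 + ω = 1 := by
  have geom_sum := hω.geom_sum_eq_zero (by norm_num)
  simp only [Finset.sum_range_succ, Finset.sum_range_zero] at geom_sum
  linear_combination geom_sum - CharTwo.two_eq_zero (R := K)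

variable (F) in
/-- The component `F` of the semisimple quotient: the augmentation map. -/
noncomputable def trivialBlock : MonoidAlgebra F CyclicProdDihedral →ₐ[F] F :=
  twistedLift F (1 : _ →* F) 1

variable (F) in
/-- The component `K` of the semisimple quotient, on which `D₁₀` acts trivially. -/
noncomputable def cubicBlock (hω : IsPrimitiveRoot ω 3) :
    MonoidAlgebra F CyclicProdDihedral →ₐ[F] K :=
  twistedLift F (cubicCharacter hω) 1

variable (F) in
/-- The component `M₂(K)` of the semisimple quotient on which `C₃` acts by the `j`-th power of
its cubic character. In characteristic two the trace `ω` satisfies the golden ratio equation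
required by `pentagonRep`. -/
noncomputable def matrixBlock [CharP K 2] (hω : IsPrimitiveRoot ω 3) (j : Fin 3) :
    MonoidAlgebra F CyclicProdDihedral →ₐ[F] Matrix (Fin 2) (Fin 2) K :=
  twistedLift F (cubicCharacter hω ^ (j : ℕ))
    (pentagonRep (sq_add_self_of_isPrimitiveRoot_three hω))

theorem trivialBlock_surjective : Function.Surjective (trivialBlock F) :=
  fun a ↦ ⟨algebraMap _ _ a, AlgHom.commutes _ a⟩

theorem cubicBlock_surjective (hω : IsPrimitiveRoot ω 3) (hF : Algebra.adjoin F {ω} = ⊤) :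
    Function.Surjective (cubicBlock F hω) := by
  have ω_mem : ω ∈ (cubicBlock F hω).range :=
    ⟨cyclicGenerator F, by
      simp [cubicBlock, twistedLift_cyclicGenerator, cubicCharacter_ofAdd_one]⟩
  rw [← AlgHom.range_eq_top, eq_top_iff, ← hF, Algebra.adjoin_le_iff, Set.singleton_subset_iff]
  exact ω_mem

theorem cubicBlock_characterProjector_zero (hω : IsPrimitiveRoot ω 3) :
    cubicBlock F hω (characterProjector F 0) = 0 := by
  simpa [cubicBlock, characterProjector, twistedLift_cyclicGenerator, cubicCharacter_ofAdd_one]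
    using hω.geom_sum_eq_zero (by norm_num)

theorem trivialBlock_characterProjector_zero [CharP F 2] :
    trivialBlock F (characterProjector F 0) = 1 := by
  have three_eq_one : (3 : F) = 1 := by linear_combination CharTwo.two_eq_zero (R := F)
  simp [trivialBlock, characterProjector, twistedLift_cyclicGenerator, three_eq_one]

theorem trivialBlock_rotationTrace [CharP F 2] : trivialBlock F (rotationTrace F) = 0 := by
  simp [trivialBlock, twistedLift_rotationTrace, CharTwo.add_self_eq_zero]

theorem cubicBlock_rotationTrace [CharP K 2] (hω : IsPrimitiveRoot ω 3) :
    cubicBlock F hω (rotationTrace F) = 0 := by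
  simp [cubicBlock, twistedLift_rotationTrace, CharTwo.add_self_eq_zero]

section MatrixBlock

variable [CharP K 2] (hω : IsPrimitiveRoot ω 3)

theorem matrixBlock_surjective (hF : Algebra.adjoin F {ω} = ⊤) (j : Fin 3) :
    Function.Surjective (matrixBlock F hω j) := by
  have five_eq_one : (5 : K) = 1 := by
    linear_combination 2 * CharTwo.two_eq_zero (R := K)
  exact twistedLift_surjective_of_lift _ _
    (lift_pentagonRep_surjective _ (five_eq_one ▸ isUnit_one) hF)

theorem matrixBlock_rotationTrace (j : Fin 3) :
    matrixBlock F hω j (rotationTrace F) = ω • 1 := by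
  rw [matrixBlock, twistedLift_rotationTrace, pentagonRep_r_one_add_r_neg_one]

theorem matrixBlock_cyclicGenerator (j : Fin 3) :
    matrixBlock F hω j (cyclicGenerator F) = ω ^ (j : ℕ) • 1 := by
  rw [matrixBlock, twistedLift_cyclicGenerator, MonoidHom.pow_apply, cubicCharacter_ofAdd_one]

theorem matrixBlock_characterProjector (i j : Fin 3) :
    matrixBlock F hω j (characterProjector F i) = if i = j then 1 else 0 := by
  classical
  have scalar : matrixBlock F hω j (characterProjector F i) =
      (∑ k ∈ Finset.range 3, (ω ^ (j + 2 * i : ℕ)) ^ k) • 1 := by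
    simp [characterProjector, matrixBlock_rotationTrace, matrixBlock_cyclicGenerator, smul_pow,
      smul_smul, pow_add, Finset.sum_smul]
  have pow_three : (ω ^ (j + 2 * i : ℕ)) ^ 3 = 1 := by
    rw [pow_right_comm, hω.pow_eq_one, one_pow]
  have pow_eq_one_iff : ω ^ (j + 2 * i : ℕ) = 1 ↔ i = j := by
    rw [hω.pow_eq_one_iff_dvd]
    omega
  have three_eq_one : ((3 : ℕ) : K) = 1 := by
    linear_combination CharTwo.two_eq_zero (R := K)
  rw [scalar, geom_sum_eq_ite_of_pow_eq_one pow_three]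
  simp only [pow_eq_one_iff, three_eq_one, ite_smul, one_smul, zero_smul]

theorem matrixBlock_rotationTrace_pow_three (j : Fin 3) :
    matrixBlock F hω j (rotationTrace F ^ 3) = 1 := by
  rw [map_pow, matrixBlock_rotationTrace, smul_pow, hω.pow_eq_one, one_pow, one_smul]

end MatrixBlock

variable (F) in
/-- The map from `F[C₃ × D₁₀]` to the product of its simple quotients. -/
noncomputable def wedderburnMap [CharP K 2] (hω : IsPrimitiveRoot ω 3) :
    MonoidAlgebra F CyclicProdDihedral →ₐ[F] F × K × (Fin 3 → Matrix (Fin 2) (Fin 2) K) :=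
  (trivialBlock F).prod ((cubicBlock F hω).prod (AlgHom.pi (matrixBlock F hω)))

theorem wedderburnMap_surjective [CharP F 2] [CharP K 2] (hω : IsPrimitiveRoot ω 3)
    (hF : Algebra.adjoin F {ω} = ⊤) : Function.Surjective (wedderburnMap F hω) := by
  have matrices : Function.Surjective (AlgHom.pi (matrixBlock F hω)) :=
    surjective_pi_of_separating (matrixBlock_surjective hω hF) (matrixBlock_characterProjector hω)
  have nontrivial : Function.Surjective
      ((cubicBlock F hω).prod (AlgHom.pi (matrixBlock F hω))) := by
    refine surjective_prod_of_separating (cubicBlock_surjective hω hF) matrices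
      (e := 1 - rotationTrace F ^ 3) ?_ ?_
    · simp [cubicBlock_rotationTrace]
    · ext1 j
      simp [-map_pow, matrixBlock_rotationTrace_pow_three]
  refine surjective_prod_of_separating trivialBlock_surjective nontrivial
    (e := characterProjector F 0 * (1 - rotationTrace F ^ 3)) ?_ ?_
  · simp [trivialBlock_characterProjector_zero, trivialBlock_rotationTrace]
  · refine Prod.ext ?_ (funext fun j ↦ ?_)
    · simp [cubicBlock_characterProjector_zero]
    · simp [-map_pow, matrixBlock_rotationTrace_pow_three]

theorem wedderburnMap_cosetSum [CharP F 2] [CharP K 2] (hω : IsPrimitiveRoot ω 3)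
    (c : Multiplicative (ZMod 3)) : wedderburnMap F hω (cosetSum F c) = 0 := by
  refine Prod.ext ?_ (Prod.ext ?_ (funext fun j ↦ ?_))
  · simp [wedderburnMap, trivialBlock, twistedLift_cosetSum, natCast_card_dihedralGroup]
  · simp [wedderburnMap, cubicBlock, twistedLift_cosetSum, natCast_card_dihedralGroup]
  · simp [wedderburnMap, matrixBlock, twistedLift_cosetSum, sum_pentagonRep]

theorem finrank_wedderburn_target (hK : Module.finrank F K = 2) :
    Module.finrank F (F × K × (Fin 3 → Matrix (Fin 2) (Fin 2) K)) = 27 := by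
  have := Module.finite_of_finrank_pos (R := F) (M := K) (by omega)
  have := Module.Finite.matrix (R := F) (M := K) (ι₁ := Fin 2) (ι₂ := Fin 2)
  simp [Module.finrank_pi_fintype, Module.finrank_matrix, hK]

theorem ker_wedderburnMap [CharP F 2] [CharP K 2] (hω : IsPrimitiveRoot ω 3)
    (hF : Algebra.adjoin F {ω} = ⊤) (hK : Module.finrank F K = 2) :
    LinearMap.ker (wedderburnMap F hω).toLinearMap =
      Submodule.span F (Set.range (cosetSum F)) := by
  symm
  apply Submodule.eq_of_le_of_finrank_eq
  · rw [Submodule.span_le, Set.range_subset_iff]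
    exact wedderburnMap_cosetSum hω
  · have card_group : Fintype.card CyclicProdDihedral = 30 := by simp [DihedralGroup.card]
    have range_add_ker := (wedderburnMap F hω).toLinearMap.finrank_range_add_finrank_ker
    rw [LinearMap.range_eq_top.mpr (wedderburnMap_surjective hω hF), finrank_top,
      finrank_wedderburn_target hK, finrank_monoidAlgebra, card_group] at range_add_ker
    rw [finrank_span_eq_card (linearIndependent_cosetSum F), Fintype.card_multiplicative,
      ZMod.card]
    exact (Nat.add_left_cancel (range_add_ker : _ = 27 + 3)).symm

end Blocks

theorem stmt_6_general {F K : Type*} [Field F] [CharP F 2] [Field K] [Algebra F K]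
    [IsCyclotomicExtension {3} F K] (hK : Module.finrank F K = 2) :
    ∃ φ : MonoidAlgebra F (Multiplicative (ZMod 3) × DihedralGroup 5) →ₐ[F]
        (F × K × (Fin 3 → Matrix (Fin 2) (Fin 2) K)),
      Function.Surjective φ ∧ RingHom.ker φ.toRingHom = Ideal.jacobson ⊥ := by
  have : CharP K 2 := charP_of_injective_algebraMap (algebraMap F K).injective 2
  have hω := IsCyclotomicExtension.zeta_spec 3 F K
  have hF := IsCyclotomicExtension.adjoin_primitive_root_eq_top (A := F) hω
  have surjective := wedderburnMap_surjective hω hF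
  refine ⟨wedderburnMap F hω, surjective, ker_eq_jacobson_bot_of_isNilpotent surjective ?_⟩
  intro x hx
  have mem_span : x ∈ Submodule.span F (Set.range (cosetSum F)) := ker_wedderburnMap hω hF hK ▸ hx
  have sq_mem := Submodule.pow_mem_pow _ mem_span 2
  rw [span_cosetSum_sq F (natCast_card_dihedralGroup F 5)] at sq_mem
  exact ⟨2, sq_mem⟩

/-- For `F` a finite field of characteristic 2 with `q ≡ 2, 8 (mod 15)` and
`G = C₃ × D₁₀`, we have `FG/J(FG) ≅ F ⊕ F₂ ⊕ M₂(F₂)³` as `F`-algebras, where `F₂` is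
the quadratic extension of `F`; stated as the existence of a surjective `F`-algebra map
with kernel `J(FG)`. -/
theorem stmt_6 (F : Type) [Field F] [Fintype F] (hchar : CharP F 2)
    (hq : Fintype.card F % 15 = 2 ∨ Fintype.card F % 15 = 8)
    (K : Type) [Field K] [Algebra F K] (hK : Module.finrank F K = 2) :
    let G := Multiplicative (ZMod 3) × DihedralGroup 5
    ∃ φ : MonoidAlgebra F G →ₐ[F]
        (F × K × (Fin 3 → Matrix (Fin 2) (Fin 2) K)),
      Function.Surjective φ ∧
      RingHom.ker φ.toRingHom = Ideal.jacobson (⊥ : Ideal (MonoidAlgebra F G)) := by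
  have := isCyclotomicExtension_three_of_card_mod_three (F := F) hK
    (by rw [Nat.card_eq_fintype_card]; omega)
  exact stmt_6_general hK
end

section
/- Let F be a finite field of characteristic 2 with |F| = 2^k and G = C_3 × D_10. Then the group 1 + J(FG) is an elementary abelian 2-group of order 2^{3k}, i.e., isomorphic to C_2^{3k}. -/
/-!
Let `A` be a finite group of odd order, `n` odd, `F` a field of characteristic `2`, and write `D`
for the dihedral group of order `2n`. The elements of `F[A × D]` whose coefficients are constant on
the cosets of `D` form a left ideal, in which all products vanish because they carry the factor
`|D| = 2n`; hence this ideal lies in the Jacobson radical. Conversely, the radical is nilpotent, so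
the trace of any of its elements vanishes in every matrix representation over a reduced commutative
ring. For the regular representation of `A` tensored with a representation `ρ` of `D` this says
`∑ d, x (a, d) • tr ρ(d) = 0`, since the regular character of `A` is `|A| ≠ 0` times the indicator
of `1`. The representation of `D` induced from the tautological character of its rotations over
`F[Cₙ]` gives `x (a, d r) = x (a, d r⁻¹)` for rotations `r`, so `x` is constant on rotations
and on reflections as `n` is odd; the trivial representation identifies the two constants.
Thus `1 + J` is isomorphic to the additive group of functions `A → F`.
-/

open MonoidAlgebra
open Matrix hiding single
open scoped Kronecker

section OneAddIdeal

variable {R : Type*} [Ring R]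

/-- The group `1 + I` of the units congruent to `1` modulo the left ideal `I`. -/
def oneAddIdeal (I : Ideal R) : Subgroup Rˣ where
  carrier := {u | (u : R) - 1 ∈ I}
  one_mem' := by simp
  mul_mem' {u v} hu hv := by
    have h : ((u * v : Rˣ) : R) - 1 = u * (v - 1) + (u - 1) := by push_cast; noncomm_ring
    simpa only [Set.mem_ofPred_eq, h] using I.add_mem (I.mul_mem_left _ hv) hu
  inv_mem' {u} hu := by
    have h : ((u⁻¹ : Rˣ) : R) - 1 = -((u⁻¹ : Rˣ) * ((u : R) - 1)) := by simp [mul_sub]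
    simpa only [Set.mem_ofPred_eq, h] using I.neg_mem (I.mul_mem_left _ hu)

/-- The isomorphism `x ↦ 1 + x` from the additive group of a left ideal with zero multiplication
onto `1 + I`. -/
def oneAddIdealEquiv {I : Ideal R} (hI : ∀ x ∈ I, ∀ y ∈ I, x * y = 0) :
    Multiplicative I ≃* oneAddIdeal I where
  toFun x :=
    ⟨⟨1 + x.toAdd, 1 - x.toAdd,
      by simp [mul_sub, add_mul, hI], by simp [mul_add, sub_mul, hI]⟩, by simp [oneAddIdeal]⟩
  invFun u := .ofAdd ⟨u.1 - 1, u.2⟩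
  left_inv x := by simp
  right_inv u := by ext; simp
  map_mul' x y := by ext; simp [mul_add, add_mul, hI, add_assoc]

theorem le_jacobson_bot_of_forall_mul_eq_zero {I : Ideal R} (hI : ∀ x ∈ I, ∀ y ∈ I, x * y = 0) :
    I ≤ Ideal.jacobson ⊥ := fun x hx ↦ by
  refine Ideal.mem_jacobson_iff.mpr fun y ↦ ⟨1 - y * x, ?_⟩
  have hyx : y * x ∈ I := I.mul_mem_left y hx
  have h : (1 - y * x) * y * x + (1 - y * x) - 1 = -(y * x * (y * x)) := by noncomm_ring
  rw [Ideal.mem_bot, h, hI _ hyx _ hyx, neg_zero]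

theorem isNilpotent_of_mem_jacobson_bot [IsArtinianRing R] {x : R}
    (hx : x ∈ Ideal.jacobson (⊥ : Ideal R)) : IsNilpotent x := by
  obtain ⟨m, hm⟩ := IsArtinianRing.isNilpotent_jacobson_bot (R := R)
  exact ⟨m, by simpa [hm] using Ideal.pow_mem_pow hx m⟩

end OneAddIdeal

section RightInvariants

variable (F A B : Type*) [Semiring F] [Group A] [Group B]

/-- The left ideal of the elements of `F[A × B]` fixed by right multiplication by `B`; these are
the elements whose coefficients depend on the `A`-component only. -/
def rightInvariants : Ideal F[A × B] where
  carrier := {x | ∀ b : B, x * single (1, b) 1 = x}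
  zero_mem' b := zero_mul _
  add_mem' hx hy b := by rw [add_mul, hx b, hy b]
  smul_mem' z x hx b := by rw [smul_eq_mul, mul_assoc, hx b]

variable {F A B}

theorem mem_rightInvariants_iff {x : F[A × B]} :
    x ∈ rightInvariants F A B ↔ ∀ a b, x.coeff (a, b) = x.coeff (a, 1) := by
  constructor
  · intro hx a b
    conv_lhs => rw [← hx b]
    simp
  · intro hx b
    ext ⟨a, c⟩
    simp [hx a (c * b⁻¹), hx a c]

theorem mul_single_eq_of_mem_rightInvariants {x : F[A × B]}
    (hx : x ∈ rightInvariants F A B) (a : A) (b : B) (s : F) :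
    x * single (a, b) s = x * single (a, 1) s := by
  conv_rhs => rw [← hx b, mul_assoc, single_mul_single]
  simp

theorem mul_eq_zero_of_mem_rightInvariants [Finite A] [Finite B] (hB : (Nat.card B : F) = 0)
    {x y : F[A × B]} (hx : x ∈ rightInvariants F A B)
    (hy : y ∈ rightInvariants F A B) : x * y = 0 := by
  have := Fintype.ofFinite A
  have := Fintype.ofFinite B
  calc x * y = ∑ a, ∑ b, x * single (a, b) (y.coeff (a, b)) := by
        rw [← Fintype.sum_prod_type', ← Finset.mul_sum]
        congr 1
        conv_lhs => rw [← sum_coeff_single y, Finsupp.sum_fintype _ _ (by simp)]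
    _ = ∑ a, ∑ _b : B, x * single (a, 1) (y.coeff (a, 1)) := by
        simp only [mul_single_eq_of_mem_rightInvariants hx, mem_rightInvariants_iff.mp hy]
    _ = 0 := by
        simp [← Nat.card_eq_fintype_card, ← Nat.cast_smul_eq_nsmul F, hB]

variable (F A B) in
/-- The identification of `rightInvariants F A B` with the functions on `A`, sending `x` to the
common values of its coefficients on the cosets of `B`. -/
noncomputable def rightInvariantsEquiv [Finite A] [Finite B] :
    rightInvariants F A B ≃+ (A → F) where
  toFun x a := x.1.coeff (a, 1)
  invFun f := ⟨ofCoeff (Finsupp.equivFunOnFinite.symm fun g ↦ f g.1),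
    mem_rightInvariants_iff.mpr fun _ _ ↦ rfl⟩
  left_inv x := by
    ext ⟨a, b⟩
    simp [mem_rightInvariants_iff.mp x.2 a b]
  right_inv f := rfl
  map_add' x y := rfl

end RightInvariants

section TraceVanishing

variable {F R A B m : Type*} [CommRing R] [Group A] [Group B] [Fintype m] [DecidableEq m]

theorem trace_lift_eq_sum [CommSemiring F] [Algebra F R] {G : Type*} [Monoid G] [Fintype G]
    (φ : G →* Matrix m m R) (x : F[G]) :
    trace (MonoidAlgebra.lift F _ G φ x) = ∑ g, x.coeff g • trace (φ g) := by
  rw [lift_apply, Finsupp.sum_fintype _ _ (by simp), trace_sum]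
  simp only [trace_smul]

section Fintype

variable [Fintype A] [DecidableEq A]

variable (R A) in
/-- The left regular representation of `A` by permutation matrices over `R`. -/
def regularMatrixHom : A →* Matrix A A R :=
  (permMatrixHom : Equiv.Perm A →* Matrix A A R).comp (MulAction.toPermHom A A)

theorem trace_regularMatrixHom (a : A) :
    trace (regularMatrixHom R A a) = if a = 1 then (Nat.card A : R) else 0 := by
  split_ifs with ha
  · simp [ha]
  · have hfixed : Function.fixedPoints (MulAction.toPerm a : Equiv.Perm A) = ∅ := by
      ext b
      simp [Function.IsFixedPt, ha]
    simp [regularMatrixHom, trace_permutation, hfixed]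

/-- The external tensor product of the regular representation of `A` with the matrix
representation `ρ` of `B`. -/
def regularKroneckerHom (ρ : B →* Matrix m m R) : A × B →* Matrix (A × m) (A × m) R where
  toFun g := regularMatrixHom R A g.1 ⊗ₖ ρ g.2
  map_one' := by simp
  map_mul' g h := by simp [mul_kronecker_mul]

theorem trace_lift_regularKroneckerHom [CommSemiring F] [Algebra F R] [Fintype B]
    (ρ : B →* Matrix m m R) (x : F[A × B]) :
    trace (MonoidAlgebra.lift F _ (A × B) (regularKroneckerHom ρ) x)
      = (Nat.card A : F) • ∑ b, x.coeff (1, b) • trace (ρ b) := by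
  rw [trace_lift_eq_sum, Fintype.sum_prod_type]
  simp [regularKroneckerHom, trace_kronecker, trace_regularMatrixHom, Nat.cast_smul_eq_nsmul,
    Finset.smul_sum]

end Fintype

theorem sum_coeff_smul_trace_eq_zero_of_mem_jacobson [Field F] [Algebra F R] [IsReduced R]
    [Finite A] [Fintype B] (hA : (Nat.card A : F) ≠ 0) (ρ : B →* Matrix m m R) {x : F[A × B]}
    (hx : x ∈ Ideal.jacobson (⊥ : Ideal F[A × B])) (a : A) (c : B) :
    ∑ b, x.coeff (a, c * b) • trace (ρ b) = 0 := by
  classical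
  have := Fintype.ofFinite A
  have : IsArtinianRing F[A × B] := .of_finite F _
  have hnil : IsNilpotent (single (a, c)⁻¹ 1 * x) :=
    isNilpotent_of_mem_jacobson_bot (Ideal.mul_mem_left _ _ hx)
  have htrace := (isNilpotent_trace_of_isNilpotent
    (hnil.map (MonoidAlgebra.lift F _ (A × B) (regularKroneckerHom ρ)))).eq_zero
  rw [trace_lift_regularKroneckerHom, smul_eq_zero_iff_right hA] at htrace
  simpa using htrace

end TraceVanishing

section Dihedral

open DihedralGroup

variable {n : ℕ} {R : Type*} [CommRing R]

/-- The representation of the dihedral group induced from the character `χ` of its subgroup of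
rotations. -/
def dihedralMatrixHom (χ : Multiplicative (ZMod n) →* R) :
    DihedralGroup n →* Matrix (Fin 2) (Fin 2) R where
  toFun
    | .r i => !![χ (.ofAdd i), 0; 0, χ (.ofAdd (-i))]
    | .sr i => !![0, χ (.ofAdd (-i)); χ (.ofAdd i), 0]
  map_one' := by
    rw [← r_zero]
    simp [one_fin_two]
  map_mul' := by
    rintro (i | i) (j | j) <;>
      simp [-ofAdd_neg, ← map_mul, ← ofAdd_add, sub_eq_add_neg, add_comm]

theorem sum_dihedralGroup [NeZero n] {M : Type*} [AddCommMonoid M] (f : DihedralGroup n → M) :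
    ∑ d, f d = ∑ i, f (r i) + ∑ i, f (sr i) := by
  rw [← equivSum.symm.sum_comp, Fintype.sum_sum_type]
  rfl

theorem sum_smul_trace_dihedralMatrixHom {F : Type*} [CommSemiring F] [Algebra F R] [NeZero n]
    (χ : Multiplicative (ZMod n) →* R) (f : DihedralGroup n → F) :
    ∑ d, f d • trace (dihedralMatrixHom χ d) =
      ∑ i, f (r i) • (χ (.ofAdd i) + χ (.ofAdd (-i))) := by
  simp [sum_dihedralGroup, dihedralMatrixHom]

theorem natCast_card_dihedralGroup_eq_zero [CharP R 2] : (Nat.card (DihedralGroup n) : R) = 0 := by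
  simp [nat_card, CharTwo.two_eq_zero]

theorem natCast_ne_zero_of_odd [CharP R 2] (hn : Odd n) : (n : R) ≠ 0 := by
  rw [Ne, CharP.cast_eq_zero_iff R 2]
  exact hn.not_two_dvd_nat

variable {F A : Type*} [Field F] [CharP F 2] [Group A] [Finite A]
  {x : F[A × DihedralGroup n]}

theorem coeff_mul_r_neg_of_mem_jacobson (hA : Odd (Nat.card A)) (hn : Odd n)
    (hx : x ∈ Ideal.jacobson (⊥ : Ideal F[A × DihedralGroup n]))
    (a : A) (d : DihedralGroup n) (i : ZMod n) :
    x.coeff (a, d * r (-i)) = x.coeff (a, d * r i) := by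
  classical
  have : NeZero n := ⟨hn.pos.ne'⟩
  have : NeZero (Nat.card (Multiplicative (ZMod n)) : F) := ⟨by simp [natCast_ne_zero_of_odd, hn]⟩
  have htrace := sum_coeff_smul_trace_eq_zero_of_mem_jacobson (natCast_ne_zero_of_odd hA)
    (dihedralMatrixHom (of F (Multiplicative (ZMod n)))) hx a d
  rw [sum_smul_trace_dihedralMatrixHom] at htrace
  have hcoeff : x.coeff (a, d * r (-i)) + x.coeff (a, d * r i) = 0 := by
    simpa [Finsupp.single_apply, ← ofAdd_neg, neg_eq_iff_eq_neg, mul_add, Finset.sum_add_distrib,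
      add_comm] using congrArg (fun y ↦ y.coeff (.ofAdd i)) htrace
  exact CharTwo.add_eq_zero.mp hcoeff

theorem coeff_mul_r_of_mem_jacobson (hA : Odd (Nat.card A)) (hn : Odd n)
    (hx : x ∈ Ideal.jacobson (⊥ : Ideal F[A × DihedralGroup n]))
    (a : A) (d : DihedralGroup n) (i : ZMod n) :
    x.coeff (a, d * r i) = x.coeff (a, d) := by
  have htwo : IsUnit (2 : ZMod n) := by
    exact_mod_cast (ZMod.isUnit_iff_coprime 2 n).mpr hn.coprime_two_left
  obtain ⟨j, rfl⟩ := Even.of_isUnit_two htwo i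
  simpa [mul_assoc] using (coeff_mul_r_neg_of_mem_jacobson hA hn hx a (d * r j) j).symm

theorem coeff_sr_zero_of_mem_jacobson (hA : Odd (Nat.card A)) (hn : Odd n)
    (hx : x ∈ Ideal.jacobson (⊥ : Ideal F[A × DihedralGroup n])) (a : A) :
    x.coeff (a, sr 0) = x.coeff (a, 1) := by
  have : NeZero n := ⟨hn.pos.ne'⟩
  have htrace := sum_coeff_smul_trace_eq_zero_of_mem_jacobson (natCast_ne_zero_of_odd hA)
    (1 : DihedralGroup n →* Matrix (Fin 1) (Fin 1) F) hx a 1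
  have hr (i : ZMod n) : x.coeff (a, r i) = x.coeff (a, 1) := by
    simpa using coeff_mul_r_of_mem_jacobson hA hn hx a 1 i
  have hsr (i : ZMod n) : x.coeff (a, sr i) = x.coeff (a, sr 0) := by
    simpa using coeff_mul_r_of_mem_jacobson hA hn hx a (sr 0) i
  have hsum : (n : F) * (x.coeff (a, sr 0) + x.coeff (a, 1)) = 0 := by
    simpa [sum_dihedralGroup, hr, hsr, mul_add, add_comm] using htrace
  exact CharTwo.add_eq_zero.mp
    ((mul_eq_zero_iff_left (natCast_ne_zero_of_odd hn)).mp hsum)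

theorem coeff_eq_of_mem_jacobson (hA : Odd (Nat.card A)) (hn : Odd n)
    (hx : x ∈ Ideal.jacobson (⊥ : Ideal F[A × DihedralGroup n]))
    (a : A) (d : DihedralGroup n) : x.coeff (a, d) = x.coeff (a, 1) := by
  rcases d with i | i
  · simpa using coeff_mul_r_of_mem_jacobson hA hn hx a 1 i
  · rw [← coeff_sr_zero_of_mem_jacobson hA hn hx a]
    simpa using coeff_mul_r_of_mem_jacobson hA hn hx a (sr 0) i

theorem jacobson_bot_eq_rightInvariants (hA : Odd (Nat.card A)) (hn : Odd n) :
    Ideal.jacobson (⊥ : Ideal F[A × DihedralGroup n]) =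
      rightInvariants F A (DihedralGroup n) := by
  have : NeZero n := ⟨hn.pos.ne'⟩
  apply le_antisymm
  · exact fun x hx ↦ mem_rightInvariants_iff.mpr fun a d ↦ coeff_eq_of_mem_jacobson hA hn hx a d
  · exact le_jacobson_bot_of_forall_mul_eq_zero fun x hx y hy ↦
      mul_eq_zero_of_mem_rightInvariants natCast_card_dihedralGroup_eq_zero hx hy

variable (F) in
theorem nonempty_oneAddIdeal_jacobson_mulEquiv (hA : Odd (Nat.card A)) (hn : Odd n) :
    Nonempty (oneAddIdeal (Ideal.jacobson (⊥ : Ideal F[A × DihedralGroup n])) ≃*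
      Multiplicative (A → F)) := by
  have : NeZero n := ⟨hn.pos.ne'⟩
  rw [jacobson_bot_eq_rightInvariants hA hn]
  exact ⟨(oneAddIdealEquiv fun _ hx _ hy ↦ mul_eq_zero_of_mem_rightInvariants
    natCast_card_dihedralGroup_eq_zero hx hy).symm.trans
      (rightInvariantsEquiv F A _).toMultiplicative⟩

end Dihedral

theorem nonempty_multiplicative_mulEquiv_of_natCard_eq_pow {p : ℕ} [Fact p.Prime] {V : Type*}
    [AddCommGroup V] [Module (ZMod p) V] {m : ℕ} (hV : Nat.card V = p ^ m) :
    Nonempty (Multiplicative V ≃* (Fin m → Multiplicative (ZMod p))) := by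
  have hp : p.Prime := Fact.out
  have : Finite V := Nat.finite_of_card_ne_zero (hV ▸ pow_ne_zero m hp.ne_zero)
  have hrank : Module.finrank (ZMod p) V = Module.finrank (ZMod p) (Fin m → ZMod p) := by
    have h := Module.natCard_eq_pow_finrank (K := ZMod p) (V := V)
    rw [hV, Nat.card_zmod] at h
    simpa using (Nat.pow_right_injective hp.two_le h).symm
  exact ⟨(LinearEquiv.ofFinrankEq V _ hrank).toAddEquiv.toMultiplicative.trans
    (MulEquiv.funMultiplicative _ _)⟩

theorem stmt_7_general {F A : Type*} [Field F] [CharP F 2] {k : ℕ} (hF : Nat.card F = 2 ^ k)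
    [Group A] [Finite A] (hA : Odd (Nat.card A)) {n : ℕ} (hn : Odd n) :
    Nonempty (oneAddIdeal (Ideal.jacobson (⊥ : Ideal F[A × DihedralGroup n])) ≃*
      (Fin (Nat.card A * k) → Multiplicative (ZMod 2))) := by
  let := ZMod.algebra F 2
  have hcard : Nat.card (A → F) = 2 ^ (Nat.card A * k) := by
    rw [Nat.card_fun, hF, ← pow_mul, mul_comm]
  obtain ⟨e⟩ := nonempty_oneAddIdeal_jacobson_mulEquiv F hA hn
  obtain ⟨e'⟩ := nonempty_multiplicative_mulEquiv_of_natCard_eq_pow hcard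
  exact ⟨e.trans e'⟩

/-- For `F` a finite field with `2^k` elements and `G = C₃ × D₁₀`, the group
`1 + J(FG)` of units is an elementary abelian 2-group of order `2^(3k)`,
i.e. isomorphic to `C₂^(3k)`. -/
theorem stmt_7 (F : Type) [Field F] [Fintype F] (k : ℕ) (hk : 0 < k)
    (hchar : CharP F 2) (hcard : Fintype.card F = 2 ^ k) :
    let G := Multiplicative (ZMod 3) × DihedralGroup 5
    ∃ H : Subgroup (MonoidAlgebra F G)ˣ,
      (∀ u : (MonoidAlgebra F G)ˣ,
        u ∈ H ↔ (u : MonoidAlgebra F G) - 1 ∈ Ideal.jacobson (⊥ : Ideal (MonoidAlgebra F G))) ∧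
      Nonempty (H ≃* (Fin (3 * k) → Multiplicative (ZMod 2))) := by
  have h3 : Nat.card (Multiplicative (ZMod 3)) = 3 := by simp
  exact ⟨oneAddIdeal _, fun _ ↦ Iff.rfl, h3 ▸ stmt_7_general
    (Nat.card_eq_fintype_card.trans hcard) (by rw [h3]; decide) (by decide)⟩
end
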